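/- arXiv:1808.06600 — 4 statements merged into one kernel-verified Lean document; each statement's English description precedes it below -/
import Mathlib

section
/- Let R = ⊕_{i≥0} R_i be a commutative Noetherian ℕ-graded ring with R₀ = k a field, finitely generated as a k-algebra, with graded maximal ideal m = ⊕_{i≥1} R_i. Let M and N be finitely generated graded R-modules, and assume M has no nonzero free direct summand. If an R-linear map f : M → N factors through a free R-module, then f(M) ⊆ mN. -/
/-!
Composing `f` with the coordinates of the free module reduces the claim to functionals
`φ : M → R`: they must take values in `m`. If not, some homogeneous `x ∈ M` of degree `j` has
`φ x` with nonzero component in degree `0`, which is a unit. The degree `-j` part `ψ` of `φ` sends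
`x` to that unit, so `M = R x ⊕ ker ψ` with `R x` free, and both summands are homogeneous because
`x` and `ψ` are.
-/

open DirectSum

section Splitting

variable {R M : Type*} [Ring R] [AddCommGroup M] [Module R M] {ψ : M →ₗ[R] R} {x : M}

theorem isCompl_span_singleton_ker_of_isUnit (h : IsUnit (ψ x)) :
    IsCompl (Submodule.span R {x}) (LinearMap.ker ψ) := by
  obtain ⟨u, hu⟩ := h
  refine .of_le ?_ fun y _ ↦ ?_
  · rintro _ ⟨hrx, hker⟩
    obtain ⟨r, rfl⟩ := Submodule.mem_span_singleton.1 hrx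
    have hr : r * (u : R) = 0 := by simpa [hu] using hker
    simp [(Units.mul_left_eq_zero u).1 hr]
  · rw [← add_sub_cancel ((ψ y * (↑u⁻¹ : R)) • x) y]
    refine Submodule.add_mem_sup
      (Submodule.smul_mem _ _ (Submodule.mem_span_singleton_self x)) ?_
    simp [← hu, mul_assoc]

theorem free_span_singleton_of_isUnit (h : IsUnit (ψ x)) :
    Module.Free R (Submodule.span R {x}) := by
  have hinj : Function.Injective (LinearMap.toSpanSingleton R M x) := by
    refine (injective_iff_map_eq_zero _).2 fun r hr ↦ h.mul_left_eq_zero.1 ?_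
    simpa using congrArg ψ hr
  exact .of_equiv (LinearEquiv.ofInjective _ hinj ≪≫ₗ
    LinearEquiv.ofEq _ _ (LinearMap.range_toSpanSingleton x))

end Splitting

theorem range_le_smul_top_of_forall_apply_mem {R M G : Type*} [Semiring R] [AddCommMonoid M]
    [Module R M] [AddCommMonoid G] [Module R G] [hG : Module.Projective R G] {I : Ideal R}
    (hI : ∀ (φ : M →ₗ[R] R) (y : M), φ y ∈ I) (α : M →ₗ[R] G) :
    LinearMap.range α ≤ I • (⊤ : Submodule R G) := by
  rintro _ ⟨y, rfl⟩
  obtain ⟨s, hs⟩ := hG.out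
  rw [← hs (α y), Finsupp.linearCombination_apply]
  exact sum_mem fun g _ ↦
    Submodule.smul_mem_smul (hI (Finsupp.lapply g ∘ₗ s ∘ₗ α) y) Submodule.mem_top

section GradedModule

variable {ι R M N σ τ υ : Type*} [DecidableEq ι] [AddGroup ι] [Semiring R] [SetLike σ R]
  [AddCommMonoid M] [Module R M] [SetLike τ M] [AddSubmonoidClass τ M]
  [AddCommMonoid N] [Module R N] [SetLike υ N] [AddSubmonoidClass υ N]

theorem coe_decompose_smul_add_of_left_mem {𝒜 : ι → σ} (ℳ : ι → τ) [Decomposition ℳ]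
    [SetLike.GradedSMul 𝒜 ℳ] {a : ι} {r : R} (hr : r ∈ 𝒜 a) (i : ι) (y : M) :
    (decompose ℳ (r • y) (a + i) : M) = r • (decompose ℳ y i : M) := by
  induction y using Decomposition.inductionOn ℳ with
  | zero => simp
  | add y z hy hz => simp [hy, hz]
  | @homogeneous j y =>
    have hry : r • (y : M) ∈ ℳ (a + j) := SetLike.GradedSMul.smul_mem hr y.2
    obtain rfl | hji := eq_or_ne j i
    · rw [decompose_of_mem_same ℳ hry, decompose_of_mem_same ℳ y.2]
    · rw [decompose_of_mem_ne ℳ hry (by simpa using hji), decompose_of_mem_ne ℳ y.2 hji, smul_zero]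

variable [AddSubmonoidClass σ R] (𝒜 : ι → σ) [GradedRing 𝒜]
  (ℳ : ι → τ) [Decomposition ℳ] [SetLike.GradedSMul 𝒜 ℳ]
  (𝒩 : ι → υ) [Decomposition 𝒩] [SetLike.GradedSMul 𝒜 𝒩]

include 𝒜 in
theorem isHomogeneous_span {s : Set M} (hs : ∀ x ∈ s, SetLike.IsHomogeneousElem ℳ x) :
    (Submodule.span R s).IsHomogeneous ℳ := by
  intro i y hy
  induction hy using Submodule.span_induction generalizing i with
  | mem x hx =>
    obtain ⟨j, hj⟩ := hs x hx
    obtain rfl | hji := eq_or_ne j i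
    · rw [decompose_of_mem_same ℳ hj]
      exact Submodule.subset_span hx
    · rw [decompose_of_mem_ne ℳ hj hji]
      exact zero_mem _
  | zero => simp
  | add y z _ _ hy hz => simpa using add_mem (hy i) (hz i)
  | smul r y _ hy =>
    induction r using Decomposition.inductionOn 𝒜 with
    | zero => simp
    | add r t hr ht => simpa [add_smul] using add_mem hr ht
    | @homogeneous a r =>
      rw [← add_neg_cancel_left a i, coe_decompose_smul_add_of_left_mem ℳ r.2]
      exact Submodule.smul_mem _ _ (hy _)

/-- The degree `d` part of an additive map `φ` between graded groups: it sends `y` of degree `i` to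
the component of `φ y` of degree `i + d`. -/
noncomputable def homogeneousPart (φ : M →+ N) (d : ι) : M →+ N :=
  (toAddMonoid fun i : ι ↦
    { toFun y := (decompose 𝒩 (φ y) (i + d) : N)
      map_zero' := by simp
      map_add' := by simp : ℳ i →+ N }).comp (decomposeAddEquiv ℳ).toAddMonoidHom

theorem homogeneousPart_of_mem (φ : M →+ N) (d : ι) {i : ι} {y : M} (hy : y ∈ ℳ i) :
    homogeneousPart ℳ 𝒩 φ d y = decompose 𝒩 (φ y) (i + d) := by
  lift y to ℳ i using hy
  simp [homogeneousPart]

theorem decompose_homogeneousPart (φ : M →+ N) (d i : ι) (y : M) :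
    (decompose 𝒩 (homogeneousPart ℳ 𝒩 φ d y) (i + d) : N) =
      homogeneousPart ℳ 𝒩 φ d (decompose ℳ y i) := by
  induction y using Decomposition.inductionOn ℳ with
  | zero => simp
  | add y z hy hz => simp [hy, hz]
  | @homogeneous j y =>
    rw [homogeneousPart_of_mem ℳ 𝒩 φ d y.2]
    obtain rfl | hji := eq_or_ne j i
    · rw [decompose_of_mem_same ℳ y.2, homogeneousPart_of_mem ℳ 𝒩 φ d y.2,
        decompose_of_mem_same 𝒩 (SetLike.coe_mem _)]
    · rw [decompose_of_mem_ne ℳ y.2 hji, map_zero,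
        decompose_of_mem_ne 𝒩 (SetLike.coe_mem _) (by simpa using hji)]

include 𝒜 in
theorem homogeneousPart_smul (φ : M →ₗ[R] N) (d : ι) (r : R) (y : M) :
    homogeneousPart ℳ 𝒩 φ.toAddMonoidHom d (r • y) =
      r • homogeneousPart ℳ 𝒩 φ.toAddMonoidHom d y := by
  induction y using Decomposition.inductionOn ℳ with
  | zero => simp
  | add y z hy hz => rw [smul_add, map_add, map_add, hy, hz, smul_add]
  | @homogeneous i y =>
    induction r using Decomposition.inductionOn 𝒜 with
    | zero => simp
    | add r s hr hs => rw [add_smul, map_add, hr, hs, add_smul]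
    | @homogeneous a r =>
      have hry : (r : R) • (y : M) ∈ ℳ (a + i) := SetLike.GradedSMul.smul_mem r.2 y.2
      rw [homogeneousPart_of_mem ℳ 𝒩 _ d hry, homogeneousPart_of_mem ℳ 𝒩 _ d y.2, add_assoc,
        ← coe_decompose_smul_add_of_left_mem 𝒩 r.2]
      simp

/-- The degree `d` part of a linear map between graded modules, as a linear map. -/
noncomputable def linearHomogeneousPart (φ : M →ₗ[R] N) (d : ι) : M →ₗ[R] N where
  __ := homogeneousPart ℳ 𝒩 φ.toAddMonoidHom d
  map_smul' := homogeneousPart_smul 𝒜 ℳ 𝒩 φ d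

theorem isHomogeneous_ker_linearHomogeneousPart (φ : M →ₗ[R] N) (d : ι) :
    (LinearMap.ker (linearHomogeneousPart 𝒜 ℳ 𝒩 φ d)).IsHomogeneous ℳ := by
  intro i y (hy : homogeneousPart ℳ 𝒩 φ.toAddMonoidHom d y = 0)
  change homogeneousPart ℳ 𝒩 φ.toAddMonoidHom d (decompose ℳ y i) = 0
  rw [← decompose_homogeneousPart, hy, decompose_zero, DirectSum.zero_apply,
    ZeroMemClass.coe_zero]

end GradedModule

section FreeSummand

variable {ι R M σ τ : Type*} [DecidableEq ι] [Ring R] [AddCommGroup M] [Module R M] [SetLike τ M]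
  [AddSubmonoidClass τ M]

variable (R) in
/-- The graded module `M` has a nonzero free direct summand: it is the direct sum of two homogeneous
submodules, the first of which is free and nonzero. -/
def HasGradedFreeSummand (ℳ : ι → τ) [Decomposition ℳ] : Prop :=
  ∃ F M' : Submodule R M, IsCompl F M' ∧ F.IsHomogeneous ℳ ∧ M'.IsHomogeneous ℳ ∧
    Module.Free R F ∧ F ≠ ⊥

theorem hasGradedFreeSummand_of_isUnit_decompose_apply_zero [Nontrivial R] [AddGroup ι]
    [SetLike σ R] [AddSubmonoidClass σ R] (𝒜 : ι → σ) [GradedRing 𝒜]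
    (ℳ : ι → τ) [Decomposition ℳ] [SetLike.GradedSMul 𝒜 ℳ] (φ : M →ₗ[R] R) {j : ι} {x : M}
    (hx : x ∈ ℳ j) (hφx : IsUnit (decompose 𝒜 (φ x) 0 : R)) : HasGradedFreeSummand R ℳ := by
  let ψ := linearHomogeneousPart 𝒜 ℳ 𝒜 φ (-j)
  have hψ : IsUnit (ψ x) := by
    have hψx : ψ x = decompose 𝒜 (φ x) (j + -j) := homogeneousPart_of_mem ℳ 𝒜 _ (-j) hx
    rwa [hψx, add_neg_cancel]
  refine ⟨Submodule.span R {x}, LinearMap.ker ψ, isCompl_span_singleton_ker_of_isUnit hψ,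
    isHomogeneous_span 𝒜 ℳ (by rintro _ rfl; exact ⟨j, hx⟩),
    isHomogeneous_ker_linearHomogeneousPart 𝒜 ℳ 𝒜 φ (-j),
    free_span_singleton_of_isUnit hψ, fun hspan ↦ hψ.ne_zero ?_⟩
  rw [Submodule.span_singleton_eq_bot.1 hspan, map_zero]

end FreeSummand

section Pushforward

variable {ι κ R M σ τ : Type*} [Semiring R] [SetLike σ R] [AddSubmonoidClass σ R]
  [AddMonoid ι] [AddMonoid κ]

/-- The `κ`-grading induced by an `ι`-grading `𝒜` along `e : ι →+ κ`: its part of degree `k` is the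
sum of the `𝒜 i` with `e i = k`. It turns an `ℕ`-graded ring into a `ℤ`-graded one. -/
def pushforwardGrading (𝒜 : ι → σ) (e : ι →+ κ) (k : κ) : AddSubmonoid R :=
  ⨆ i : {i // e i = k}, .ofClass (𝒜 i)

variable (𝒜 : ι → σ) (e : ι →+ κ)

variable {𝒜} in
theorem mem_pushforwardGrading {i : ι} {r : R} (hr : r ∈ 𝒜 i) :
    r ∈ pushforwardGrading 𝒜 e (e i) :=
  AddSubmonoid.mem_iSup_of_mem (⟨i, rfl⟩ : {l // e l = e i}) hr

variable {𝒜 e} in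
theorem pushforwardGrading_le {k : κ} {S : AddSubmonoid R}
    (h : ∀ i, e i = k → ∀ r ∈ 𝒜 i, r ∈ S) : pushforwardGrading 𝒜 e k ≤ S :=
  iSup_le fun i ↦ h i i.2

theorem gradedSMul_pushforwardGrading [AddCommMonoid M] [Module R M] [SetLike τ M]
    [AddSubmonoidClass τ M] (ℳ : κ → τ)
    (hℳ : ∀ (i : ι) (k : κ) (r : R) (x : M), r ∈ 𝒜 i → x ∈ ℳ k → r • x ∈ ℳ (e i + k)) :
    SetLike.GradedSMul (pushforwardGrading 𝒜 e) ℳ where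
  smul_mem k l r x hr hx := by
    let S : AddSubmonoid R :=
      (AddSubmonoid.ofClass (ℳ (k + l))).comap ((AddMonoidHom.flip (smulAddHom R M)) x)
    refine (pushforwardGrading_le (S := S) ?_) hr
    rintro i rfl s hs
    exact hℳ i l s x hs hx

open scoped Pointwise in
instance gradedMonoid_pushforwardGrading [SetLike.GradedMonoid 𝒜] :
    SetLike.GradedMonoid (pushforwardGrading 𝒜 e) where
  one_mem := by simpa using mem_pushforwardGrading e (SetLike.one_mem_graded 𝒜)
  mul_mem k l r s hr hs := by
    have hmul : pushforwardGrading 𝒜 e k * pushforwardGrading 𝒜 e l ≤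
        pushforwardGrading 𝒜 e (k + l) := by
      simp only [pushforwardGrading, AddSubmonoid.iSup_mul, AddSubmonoid.mul_iSup, iSup_le_iff,
        AddSubmonoid.mul_le]
      rintro ⟨i, rfl⟩ ⟨j, rfl⟩ r hr s hs
      rw [← map_add]
      exact mem_pushforwardGrading e (SetLike.mul_mem_graded hr hs)
    exact hmul (AddSubmonoid.mul_mem_mul hr hs)

variable [DecidableEq ι] [DecidableEq κ] [GradedRing 𝒜]

/-- The decomposition of an element of `R` into its components for `pushforwardGrading 𝒜 e`. -/
noncomputable def pushforwardDecompose : R →+ ⨁ k, pushforwardGrading 𝒜 e k :=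
  (toAddMonoid fun i ↦ (of (fun k ↦ pushforwardGrading 𝒜 e k) (e i)).comp
    ((AddSubmonoidClass.subtype (𝒜 i)).codRestrict (pushforwardGrading 𝒜 e (e i))
      fun r ↦ mem_pushforwardGrading e r.2)).comp
    (decomposeAddEquiv 𝒜).toAddMonoidHom

theorem pushforwardDecompose_of_mem {i : ι} {r : R} (hr : r ∈ 𝒜 i) :
    pushforwardDecompose 𝒜 e r = of _ (e i) ⟨r, mem_pushforwardGrading e hr⟩ := by
  lift r to 𝒜 i using hr
  simp [pushforwardDecompose]

theorem coeAddMonoidHom_pushforwardDecompose (r : R) :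
    DirectSum.coeAddMonoidHom (pushforwardGrading 𝒜 e) (pushforwardDecompose 𝒜 e r) = r := by
  induction r using Decomposition.inductionOn 𝒜 with
  | zero => simp
  | add r s hr hs => rw [map_add, map_add, hr, hs]
  | @homogeneous i r => rw [pushforwardDecompose_of_mem 𝒜 e r.2, DirectSum.coeAddMonoidHom_of]

theorem pushforwardDecompose_coe {k : κ} (r : pushforwardGrading 𝒜 e k) :
    pushforwardDecompose 𝒜 e r = of (fun k ↦ pushforwardGrading 𝒜 e k) k r := by
  have hrange : pushforwardGrading 𝒜 e k ≤
      (AddMonoidHom.mrange (of (fun k ↦ pushforwardGrading 𝒜 e k) k)).comap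
        (pushforwardDecompose 𝒜 e) := by
    refine pushforwardGrading_le ?_
    rintro i rfl s hs
    exact ⟨_, (pushforwardDecompose_of_mem 𝒜 e hs).symm⟩
  obtain ⟨s, hs⟩ := hrange r.2
  have hsr : s = r := by
    rw [← Subtype.coe_inj, ← coeAddMonoidHom_pushforwardDecompose 𝒜 e (r : R), ← hs,
      DirectSum.coeAddMonoidHom_of]
  rw [← hs, hsr]

noncomputable instance gradedRing_pushforwardGrading : GradedRing (pushforwardGrading 𝒜 e) where
  toDecomposition := .ofAddHom _ (pushforwardDecompose 𝒜 e)
    (AddMonoidHom.ext (coeAddMonoidHom_pushforwardDecompose 𝒜 e))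
    (by ext1 k; ext1 r; simp [pushforwardDecompose_coe])

theorem coe_decompose_pushforwardGrading {e : ι →+ κ} (he : Function.Injective e) (r : R) (i : ι) :
    (decompose (pushforwardGrading 𝒜 e) r (e i) : R) = decompose 𝒜 r i := by
  induction r using Decomposition.inductionOn 𝒜 with
  | zero => simp
  | add r s hr hs => simp [hr, hs]
  | @homogeneous l r =>
    have hr := mem_pushforwardGrading e r.2
    obtain rfl | hli := eq_or_ne l i
    · rw [decompose_of_mem_same _ hr, decompose_of_mem_same 𝒜 r.2]
    · rw [decompose_of_mem_ne _ hr (he.ne hli), decompose_of_mem_ne 𝒜 r.2 hli]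

end Pushforward

section Irrelevant

variable {ι κ R M σ τ : Type*} [DecidableEq ι] [DecidableEq κ] [AddCommMonoid ι] [PartialOrder ι]
  [CanonicallyOrderedAdd ι] [AddGroup κ] [Ring R] [SetLike σ R] [AddSubmonoidClass σ R]
  [AddCommGroup M] [Module R M] [SetLike τ M] [AddSubmonoidClass τ M]

theorem apply_mem_irrelevant_of_not_hasGradedFreeSummand {e : ι →+ κ} (he : Function.Injective e)
    (𝒜 : ι → σ) [GradedRing 𝒜] (h0 : ∀ r ∈ 𝒜 0, r ≠ 0 → IsUnit r)
    (ℳ : κ → τ) [Decomposition ℳ]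
    (hℳ : ∀ (i : ι) (k : κ) (r : R) (x : M), r ∈ 𝒜 i → x ∈ ℳ k → r • x ∈ ℳ (e i + k))
    (hM : ¬ HasGradedFreeSummand R ℳ) (φ : M →ₗ[R] R) (y : M) :
    φ y ∈ (HomogeneousIdeal.irrelevant 𝒜).toIdeal := by
  induction y using Decomposition.inductionOn ℳ with
  | zero => simp
  | add y z hy hz => rw [map_add]; exact add_mem hy hz
  | @homogeneous j x =>
    by_contra hx
    have hne : (decompose 𝒜 (φ x) 0 : R) ≠ 0 := hx
    have : Nontrivial R := nontrivial_of_ne _ _ hne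
    have : SetLike.GradedSMul (pushforwardGrading 𝒜 e) ℳ := gradedSMul_pushforwardGrading 𝒜 e ℳ hℳ
    refine hM (hasGradedFreeSummand_of_isUnit_decompose_apply_zero
      (pushforwardGrading 𝒜 e) ℳ φ x.2 ?_)
    rw [← map_zero e, coe_decompose_pushforwardGrading 𝒜 he]
    exact h0 _ (SetLike.coe_mem _) hne

theorem stmt_3_general {G N : Type*} [AddCommMonoid G] [Module R G] [Module.Projective R G]
    [AddCommMonoid N] [Module R N] {e : ι →+ κ} (he : Function.Injective e)
    (𝒜 : ι → σ) [GradedRing 𝒜] (h0 : ∀ r ∈ 𝒜 0, r ≠ 0 → IsUnit r)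
    (ℳ : κ → τ) [Decomposition ℳ]
    (hℳ : ∀ (i : ι) (k : κ) (r : R) (x : M), r ∈ 𝒜 i → x ∈ ℳ k → r • x ∈ ℳ (e i + k))
    (hM : ¬ HasGradedFreeSummand R ℳ) (α : M →ₗ[R] G) (β : G →ₗ[R] N) :
    LinearMap.range (β ∘ₗ α) ≤
      (HomogeneousIdeal.irrelevant 𝒜).toIdeal • (⊤ : Submodule R N) := by
  have hα := range_le_smul_top_of_forall_apply_mem
    (apply_mem_irrelevant_of_not_hasGradedFreeSummand he 𝒜 h0 ℳ hℳ hM) α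
  rw [LinearMap.range_comp]
  refine (Submodule.map_mono hα).trans ?_
  rw [Submodule.map_smul'']
  exact Submodule.smul_mono le_rfl le_top

end Irrelevant

/-- Let `R` be a commutative Noetherian ℕ-graded ring with `R₀ = k`
a field, finitely generated as a `k`-algebra, with graded maximal ideal `m`
(the irrelevant ideal).  Let `M`, `N` be finitely generated graded `R`-modules and
assume `M` has no nonzero (graded) free direct summand.  If `f : M → N` factors
through a free `R`-module, then `f(M) ⊆ mN`. -/
theorem stmt_3 {k R M N : Type} [Field k] [CommRing R] [IsNoetherianRing R] [Algebra k R]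
    (𝒜 : ℕ → Submodule k R) [GradedAlgebra 𝒜] (h0 : 𝒜 0 = 1) [Algebra.FiniteType k R]
    [AddCommGroup M] [Module R M] [Module.Finite R M]
    [AddCommGroup N] [Module R N] [Module.Finite R N]
    (ℳ : ℤ → AddSubgroup M) (𝒩 : ℤ → AddSubgroup N)
    [DirectSum.Decomposition ℳ] [DirectSum.Decomposition 𝒩]
    (hℳ : ∀ (i : ℕ) (j : ℤ) (r : R) (x : M), r ∈ 𝒜 i → x ∈ ℳ j → r • x ∈ ℳ ((i : ℤ) + j))
    (h𝒩 : ∀ (i : ℕ) (j : ℤ) (r : R) (x : N), r ∈ 𝒜 i → x ∈ 𝒩 j → r • x ∈ 𝒩 ((i : ℤ) + j))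
    (hM : ¬ ∃ (F M' : Submodule R M), IsCompl F M' ∧
      (∀ (j : ℤ), ∀ x ∈ F, ((DirectSum.decompose ℳ x j : ℳ j) : M) ∈ F) ∧
      (∀ (j : ℤ), ∀ x ∈ M', ((DirectSum.decompose ℳ x j : ℳ j) : M) ∈ M') ∧
      Module.Free R ↥F ∧ F ≠ ⊥)
    (f : M →ₗ[R] N)
    (hf : ∃ (G : Type) (_ : AddCommGroup G) (_ : Module R G), Module.Free R G ∧
      ∃ (α : M →ₗ[R] G) (β : G →ₗ[R] N), f = β ∘ₗ α) :
    LinearMap.range f ≤ (HomogeneousIdeal.irrelevant 𝒜).toIdeal • (⊤ : Submodule R N) := by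
  obtain ⟨G, _, _, _, α, β, rfl⟩ := hf
  have isUnit_of_mem_zero : ∀ r ∈ 𝒜 0, r ≠ 0 → IsUnit r := by
    rintro r hr hne
    obtain ⟨c, rfl⟩ := Submodule.mem_one.1 (h0 ▸ hr)
    exact (IsUnit.mk0 c fun hc ↦ hne (by rw [hc, map_zero])).map (algebraMap k R)
  exact stmt_3_general (e := Nat.castAddMonoidHom ℤ) Nat.cast_injective 𝒜 isUnit_of_mem_zero
    ℳ hℳ hM α β
end

section
/- Let m₁ and m₂ be relatively prime integers with m₁ ≥ 2 and m₂ ≥ 2, let a ≥ 2 be an integer, and let b, c be nonnegative integers with b + c ≥ 2 and gcd(a, b·m₁ + c·m₂) = 1. Set F = a(m₁m₂ − m₁ − m₂) + (a − 1)(b·m₁ + c·m₂). Then 2F > a·m₁·m₂ and 2F > a·(b·m₁ + c·m₂). -/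
/-!
Put `N = b * m₁ + c * m₂`. The identities
* `2 * F - a * m₁ * m₂ = a * ((m₁ - 2) * (m₂ - 2)) + 2 * (a * N - (N + 2 * a))`,
* `2 * F - a * N = 2 * a * (m₁ * m₂ - (m₁ + m₂)) + (a - 2) * N`

reduce the two bounds to `N + 2 * a < a * N` and `m₁ + m₂ < m₁ * m₂`. Both are instances of
`p * y + x * q < 2 * (x * y)` for `p, q > 0` and `(p, q) < (x, y)` in the product order, with
`(p, q)` equal to `(2, 4)` and `(2, 2)`. Since neither pair is coprime, coprimality rules out
equality.
-/

section OrderedSemiring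

variable {R : Type*} [Semiring R] [PartialOrder R]

theorem mul_add_mul_lt_two_mul_mul_of_mk_lt_mk [IsStrictOrderedRing R] {p q x y : R}
    (hp : 0 < p) (hq : 0 < q) (h : (p, q) < (x, y)) : p * y + x * q < 2 * (x * y) := by
  rw [two_mul]
  rcases Prod.mk_lt_mk.mp h with ⟨hpx, hqy⟩ | ⟨hpx, hqy⟩
  · exact add_lt_add_of_lt_of_le (mul_lt_mul_of_pos_right hpx (hq.trans_le hqy))
      (mul_le_mul_of_nonneg_left hqy (hp.trans hpx).le)
  · exact add_lt_add_of_le_of_lt (mul_le_mul_of_nonneg_right hpx (hq.trans hqy).le)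
      (mul_lt_mul_of_pos_left hqy (hp.trans_le hpx))

theorem mul_le_mul_add_mul_of_le_add [IsOrderedRing R] {b c d k x y : R} (hb : 0 ≤ b)
    (hc : 0 ≤ c) (hd : 0 ≤ d) (hk : k ≤ b + c) (hx : d ≤ x) (hy : d ≤ y) :
    k * d ≤ b * x + c * y :=
  calc
    k * d ≤ (b + c) * d := by gcongr
    _ = b * d + c * d := add_mul b c d
    _ ≤ b * x + c * y := by gcongr

end OrderedSemiring

theorem mk_lt_mk_of_le_of_gcd_eq_one {p q x y : ℤ} (hpq : Int.gcd p q ≠ 1)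
    (hxy : Int.gcd x y = 1) (hpx : p ≤ x) (hqy : q ≤ y) : (p, q) < (x, y) :=
  lt_of_le_of_ne ⟨hpx, hqy⟩ fun h ↦ hpq <| by
    obtain ⟨rfl, rfl⟩ := Prod.mk.inj h
    exact hxy

theorem stmt_7_general {R : Type*} [CommRing R] [LinearOrder R] [IsStrictOrderedRing R]
    {m₁ m₂ a N : R} (hm : (2, 2) < (m₁, m₂)) (haN : (2, 4) < (a, N)) :
    a * m₁ * m₂ < 2 * (a * (m₁ * m₂ - m₁ - m₂) + (a - 1) * N) ∧
      a * N < 2 * (a * (m₁ * m₂ - m₁ - m₂) + (a - 1) * N) := by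
  obtain ⟨hm₁, hm₂⟩ := Prod.mk_le_mk.mp hm.le
  obtain ⟨ha, hN⟩ := Prod.mk_le_mk.mp haN.le
  have ha_pos : 0 < a := two_pos.trans_le ha
  have hm_add : m₁ + m₂ < m₁ * m₂ := by
    linarith [mul_add_mul_lt_two_mul_mul_of_mk_lt_mk two_pos two_pos hm]
  have haN_add : N + 2 * a < a * N := by
    linarith [mul_add_mul_lt_two_mul_mul_of_mk_lt_mk two_pos four_pos haN]
  constructor
  · have : 0 ≤ a * ((m₁ - 2) * (m₂ - 2)) :=
      mul_nonneg ha_pos.le (mul_nonneg (sub_nonneg.mpr hm₁) (sub_nonneg.mpr hm₂))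
    linarith
  · have hfrob : 0 < a * (m₁ * m₂ - (m₁ + m₂)) := mul_pos ha_pos (sub_pos.mpr hm_add)
    have : 0 ≤ (a - 2) * N := mul_nonneg (sub_nonneg.mpr ha) (four_pos.le.trans hN)
    linarith

/-- Condition (*) for three-generated complete intersection
numerical semigroups: with `m₁, m₂ ≥ 2` coprime, `a ≥ 2`, `b, c ≥ 0`, `b + c ≥ 2`,
`gcd(a, bm₁ + cm₂) = 1`, and `F = a(m₁m₂ − m₁ − m₂) + (a − 1)(bm₁ + cm₂)`,
we have `2F > am₁m₂` and `2F > a(bm₁ + cm₂)`. -/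
theorem stmt_7 (m₁ m₂ a b c F : ℤ) (hm₁ : 2 ≤ m₁) (hm₂ : 2 ≤ m₂)
    (hm : Int.gcd m₁ m₂ = 1) (ha : 2 ≤ a) (hb : 0 ≤ b) (hc : 0 ≤ c)
    (hbc : 2 ≤ b + c) (hgcd : Int.gcd a (b * m₁ + c * m₂) = 1)
    (hF : F = a * (m₁ * m₂ - m₁ - m₂) + (a - 1) * (b * m₁ + c * m₂)) :
    2 * F > a * m₁ * m₂ ∧ 2 * F > a * (b * m₁ + c * m₂) := by
  have hN : 4 ≤ b * m₁ + c * m₂ := mul_le_mul_add_mul_of_le_add hb hc zero_le_two hbc hm₁ hm₂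
  exact hF ▸ stmt_7_general (mk_lt_mk_of_le_of_gcd_eq_one (by decide) hm hm₁ hm₂)
    (mk_lt_mk_of_le_of_gcd_eq_one (by decide) hgcd ha hN)
end

section
/- Let a₁, a₂ be relatively prime integers ≥ 2, let a′₁, a′₂ be relatively prime integers ≥ 2, let λ ≥ 2 and μ ≥ 2 be integers, and let d be an integer with d ≥ λμ. Set F = d + μ(a₁a₂ − a₁ − a₂) + λ(a′₁a′₂ − a′₁ − a′₂). Then 2F > d, 2F > μ·a₁·a₂, and 2F > λ·a′₁·a′₂. -/
/-!
Both inequalities on products come from the identity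
`2F - μa₁a₂ = 2(d - 2μ) + μ(a₁ - 2)(a₂ - 2) + 2λ(a₁'a₂' - a₁' - a₂')` and its mirror image.
The Frobenius numbers `ab - a - b` are positive because `ab = a + b` would give `a ∣ b`,
which is impossible for coprime `a, b ≥ 2`.
-/

theorem add_lt_mul_of_isCoprime {a b : ℤ} (ha : 2 ≤ a) (hb : 2 ≤ b) (hab : IsCoprime a b) :
    a + b < a * b := by
  refine (add_le_mul ha hb).lt_of_ne fun h => ?_
  have hdvd : a ∣ b := (dvd_add_right dvd_rfl).mp (h ▸ dvd_mul_right a b)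
  rcases Int.isUnit_iff.mp (hab.isUnit_of_dvd' dvd_rfl hdvd) with rfl | rfl <;> omega

section LinearOrderedRing

variable {R : Type*} [CommRing R] [LinearOrder R] [IsStrictOrderedRing R]

theorem mul_mul_le_two_mul_add_mul_sub_sub {a b m d : R} (ha : 2 ≤ a) (hb : 2 ≤ b)
    (hm : 0 ≤ m) (hd : 2 * m ≤ d) : m * (a * b) ≤ 2 * (d + m * (a * b - a - b)) := by
  have hab : 0 ≤ m * ((a - 2) * (b - 2)) :=
    mul_nonneg hm (mul_nonneg (sub_nonneg.mpr ha) (sub_nonneg.mpr hb))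
  linarith

theorem stmt_8_general {a₁ a₂ a₁' a₂' lam mu d F : R}
    (h1 : 2 ≤ a₁) (h2 : 2 ≤ a₂) (hlt : a₁ + a₂ < a₁ * a₂)
    (h1' : 2 ≤ a₁') (h2' : 2 ≤ a₂') (hlt' : a₁' + a₂' < a₁' * a₂')
    (hlam : 0 < lam) (hmu : 0 < mu) (hdlam : 2 * lam ≤ d) (hdmu : 2 * mu ≤ d)
    (hF : F = d + mu * (a₁ * a₂ - a₁ - a₂) + lam * (a₁' * a₂' - a₁' - a₂')) :
    2 * F > d ∧ 2 * F > mu * (a₁ * a₂) ∧ 2 * F > lam * (a₁' * a₂') := by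
  have hpos : 0 < mu * (a₁ * a₂ - a₁ - a₂) := mul_pos hmu (by linarith)
  have hpos' : 0 < lam * (a₁' * a₂' - a₁' - a₂') := mul_pos hlam (by linarith)
  have hle := mul_mul_le_two_mul_add_mul_sub_sub h1 h2 hmu.le hdmu
  have hle' := mul_mul_le_two_mul_add_mul_sub_sub h1' h2' hlam.le hdlam
  refine ⟨?_, ?_, ?_⟩ <;> linarith

end LinearOrderedRing

/-- Condition (*) for a gluing of two two-generated numerical
semigroups: with `a₁, a₂ ≥ 2` coprime, `a₁', a₂' ≥ 2` coprime, `λ, μ ≥ 2`,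
`d ≥ λμ`, and `F = d + μ(a₁a₂ − a₁ − a₂) + λ(a₁'a₂' − a₁' − a₂')`, we have
`2F > d`, `2F > μa₁a₂`, and `2F > λa₁'a₂'`. -/
theorem stmt_8 (a₁ a₂ a₁' a₂' lam mu d F : ℤ)
    (h1 : 2 ≤ a₁) (h2 : 2 ≤ a₂) (hco : Int.gcd a₁ a₂ = 1)
    (h1' : 2 ≤ a₁') (h2' : 2 ≤ a₂') (hco' : Int.gcd a₁' a₂' = 1)
    (hlam : 2 ≤ lam) (hmu : 2 ≤ mu) (hd : lam * mu ≤ d)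
    (hF : F = d + mu * (a₁ * a₂ - a₁ - a₂) + lam * (a₁' * a₂' - a₁' - a₂')) :
    2 * F > d ∧ 2 * F > mu * (a₁ * a₂) ∧ 2 * F > lam * (a₁' * a₂') :=
  stmt_8_general h1 h2 (add_lt_mul_of_isCoprime h1 h2 (Int.isCoprime_iff_gcd_eq_one.mpr hco))
    h1' h2' (add_lt_mul_of_isCoprime h1' h2' (Int.isCoprime_iff_gcd_eq_one.mpr hco'))
    (by linarith) (by linarith) (by nlinarith) (by nlinarith) hF
end

section
/- Let λ ≥ 2 and μ ≥ 2 be integers, let F and F′ be integers with F ≥ 1 and F′ ≥ −1, and let d be an integer with d ≥ λμ. Set F″ = d + μF + λF′. Then: (i) 2F″ > d; (ii) for every integer e, if 2F > e then 2F″ > μe; (iii) if F′ ≥ 1, then for every integer e′, if 2F′ > e′ then 2F″ > λe′; (iv) if F′ = a′₁a′₂ − a′₁ − a′₂ for some relatively prime integers a′₁, a′₂ ≥ 2, then 2F″ > λ·a′₁·a′₂. -/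
/-!
Each of the gaps `2F'' - d`, `2F'' - μe`, `2F'' - λe'`, `2F'' - λa₁'a₂'` is the sum of a positive
term and a multiple of some `d + λx` with `-μ ≤ x`, which is nonnegative because `λμ ≤ d`.
In (iv), `2(a₁'a₂' - a₁' - a₂')` falls short of `a₁'a₂'` by at most `4 ≤ 2μ`, and this deficit is
absorbed by `2d`.
-/

/-- The Frobenius number `F''` of a gluing with parameters `lam` and `mu` of semigroups with
Frobenius numbers `F` and `F'`, where `d` is the degree of the additional relation. It is encoded
by its formula, so that the arguments may be arbitrary elements of a ring. -/
def gluingFrobenius {R : Type*} [Semiring R] (lam mu F F' d : R) : R :=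
  d + mu * F + lam * F'

section Inequalities

variable {R : Type*} [CommRing R] [LinearOrder R] [IsStrictOrderedRing R]
  {lam mu F F' d : R}

theorem add_mul_nonneg_of_neg_le {x : R} (hlam : 0 ≤ lam) (hd : lam * mu ≤ d) (hx : -mu ≤ x) :
    0 ≤ d + lam * x := by
  have : lam * -mu ≤ lam * x := mul_le_mul_of_nonneg_left hx hlam
  linarith

theorem mul_le_two_mul_mul_sub_sub_add_four {a b : R} (ha : 2 ≤ a) (hb : 2 ≤ b) :
    a * b ≤ 2 * (a * b - a - b) + 4 := by
  have : 0 ≤ (a - 2) * (b - 2) := mul_nonneg (sub_nonneg.2 ha) (sub_nonneg.2 hb)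
  linarith

theorem lt_two_mul_gluingFrobenius (hlam : 0 ≤ lam) (hmu : 2 ≤ mu) (hF : 0 < F) (hF' : -1 ≤ F')
    (hd : lam * mu ≤ d) : d < 2 * gluingFrobenius lam mu F F' d := by
  have hmuF : 0 < mu * F := mul_pos (by linarith) hF
  have hslack : 0 ≤ d + lam * (2 * F') := add_mul_nonneg_of_neg_le hlam hd (by linarith)
  rw [gluingFrobenius]
  linarith

theorem mul_left_lt_two_mul_gluingFrobenius {e : R} (hlam : 0 ≤ lam) (hmu : 1 ≤ mu)
    (hF' : -1 ≤ F') (hd : lam * mu ≤ d) (he : e < 2 * F) :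
    mu * e < 2 * gluingFrobenius lam mu F F' d := by
  have hmue : mu * e < mu * (2 * F) := mul_lt_mul_of_pos_left he (by linarith)
  have hslack : 0 ≤ d + lam * F' := add_mul_nonneg_of_neg_le hlam hd (by linarith)
  rw [gluingFrobenius]
  linarith

theorem mul_lt_two_mul_gluingFrobenius_of_le_add {e' : R} (hlam : 0 ≤ lam) (hmu : 0 < mu)
    (hF : 0 < F) (hd : lam * mu ≤ d) (he' : e' ≤ 2 * F' + 2 * mu) :
    lam * e' < 2 * gluingFrobenius lam mu F F' d := by
  have hmuF : 0 < mu * F := mul_pos hmu hF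
  have hslack : 0 ≤ 2 * d + lam * (2 * F' - e') :=
    add_mul_nonneg_of_neg_le (mu := 2 * mu) hlam (by linarith) (by linarith)
  rw [gluingFrobenius]
  linarith

theorem stmt_9_general (hlam : 0 ≤ lam) (hmu : 2 ≤ mu) (hF : 0 < F) (hF' : -1 ≤ F')
    (hd : lam * mu ≤ d) :
    d < 2 * gluingFrobenius lam mu F F' d ∧
    (∀ e, e < 2 * F → mu * e < 2 * gluingFrobenius lam mu F F' d) ∧
    (∀ e', e' < 2 * F' → lam * e' < 2 * gluingFrobenius lam mu F F' d) ∧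
    (∀ a b, 2 ≤ a → 2 ≤ b → F' = a * b - a - b →
      lam * (a * b) < 2 * gluingFrobenius lam mu F F' d) := by
  have hmu_pos : 0 < mu := two_pos.trans_le hmu
  refine ⟨lt_two_mul_gluingFrobenius hlam hmu hF hF' hd,
    fun e he ↦ mul_left_lt_two_mul_gluingFrobenius hlam (one_le_two.trans hmu) hF' hd he,
    fun e' he' ↦ mul_lt_two_mul_gluingFrobenius_of_le_add hlam hmu_pos hF hd (by linarith),
    fun a b ha hb hab ↦ mul_lt_two_mul_gluingFrobenius_of_le_add hlam hmu_pos hF hd ?_⟩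
  have hab_le : a * b ≤ 2 * F' + 4 := hab ▸ mul_le_two_mul_mul_sub_sub_add_four ha hb
  linarith

end Inequalities

/-- The inductive step showing that gluings preserve Condition (*):
with `λ, μ ≥ 2`, `F ≥ 1`, `F' ≥ −1`, `d ≥ λμ`, and `F'' = d + μF + λF'`, we have
(i) `2F'' > d`; (ii) if `2F > e` then `2F'' > μe`; (iii) if `F' ≥ 1` and `2F' > e'`
then `2F'' > λe'`; (iv) if `F' = a₁'a₂' − a₁' − a₂'` for some coprime integers
`a₁', a₂' ≥ 2`, then `2F'' > λa₁'a₂'`. -/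
theorem stmt_9 (lam mu F F' d F'' : ℤ) (hlam : 2 ≤ lam) (hmu : 2 ≤ mu)
    (hF : 1 ≤ F) (hF' : -1 ≤ F') (hd : lam * mu ≤ d)
    (hF'' : F'' = d + mu * F + lam * F') :
    2 * F'' > d ∧
    (∀ e : ℤ, 2 * F > e → 2 * F'' > mu * e) ∧
    (1 ≤ F' → ∀ e' : ℤ, 2 * F' > e' → 2 * F'' > lam * e') ∧
    (∀ a₁' a₂' : ℤ, 2 ≤ a₁' → 2 ≤ a₂' → Int.gcd a₁' a₂' = 1 →
      F' = a₁' * a₂' - a₁' - a₂' → 2 * F'' > lam * (a₁' * a₂')) := by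
  obtain ⟨h_i, h_ii, h_iii, h_iv⟩ := stmt_9_general (by lia) hmu hF hF' hd
  subst hF''
  exact ⟨h_i, h_ii, fun _ ↦ h_iii, fun a₁' a₂' h₁ h₂ _ ↦ h_iv a₁' a₂' h₁ h₂⟩
end
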